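/- Let Z and X be measurable spaces with σ-finite measures. Let k : Z × Z → [0, ∞) be a measurable symmetric probability density with marginal π_Z(z) = ∫ k(z, z′) dz′, let p : Z × X → [0, ∞) be a measurable decoder density with ∫ p(z, x) dx = 1 for all z, let p_X(x) = ∫ p(z, x) π_Z(z) dz be the model marginal, and let q : X × Z → [0, ∞) be a measurable encoder density. Assume the consistency condition q(x, z) · p_X(x) = p(z, x) · π_Z(z) for almost every (x, z). Define Q̄(x, x′) = ∭ p_X(x) q(x, z) (k(z, z′)/π_Z(z)) p(z′, x′) dz dz′ (on the set where π_Z(z) > 0). Then Q̄(x, x′) = P̄(x, x′) for almost every (x, x′), where P̄(x, x′) = ∬ p(z, x) p(z′, x′) k(z, z′) dz dz′; consequently ∫ Q̄(x, x′) dx = p_X(x′), i.e. the encode–couple–decode transition kernel leaves the model marginal p_X invariant. (This is Proposition 3 of the paper.) -/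

import Mathlib

open MeasureTheory
open scoped ENNReal

/-- Proposition 3: if the encoder `q` equals the exact posterior of the decoder model, i.e.
`q(x, z) ⋅ p_X(x) = p(z, x) ⋅ π_Z(z)` almost everywhere (the consistency condition), then the
encode–couple–decode joint density `Q̄` agrees almost everywhere with the model joint density
`P̄(x, x') = ∬ p(z, x) p(z', x') k(z, z') dz dz'`; consequently the induced transition kernel
leaves the model marginal `p_X` invariant: `∫ Q̄(x, x') dx = p_X(x')` for a.e. `x'`. -/
theorem consistency_implies_model_marginal_invariant
    {Z X : Type*} [MeasurableSpace Z] [MeasurableSpace X]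
    (μZ : Measure Z) (μX : Measure X) [SigmaFinite μZ] [SigmaFinite μX]
    (k : Z → Z → ℝ≥0∞) (hk : Measurable (Function.uncurry k))
    (hksymm : ∀ z z', k z z' = k z' z)
    (hkprob : ∫⁻ z, ∫⁻ z', k z z' ∂μZ ∂μZ = 1)
    (p : Z → X → ℝ≥0∞) (hp : Measurable (Function.uncurry p))
    (hpprob : ∀ z, ∫⁻ x, p z x ∂μX = 1)
    (q : X → Z → ℝ≥0∞) (hq : Measurable (Function.uncurry q))
    (πZ : Z → ℝ≥0∞) (hπZ : ∀ z, πZ z = ∫⁻ z', k z z' ∂μZ)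
    (pX : X → ℝ≥0∞) (hpX : ∀ x, pX x = ∫⁻ z, p z x * πZ z ∂μZ)
    (hconsistent : ∀ᵐ xz : X × Z ∂(μX.prod μZ),
      q xz.1 xz.2 * pX xz.1 = p xz.2 xz.1 * πZ xz.2)
    (Qbar : X → X → ℝ≥0∞)
    (hQbar : ∀ x x', Qbar x x' =
      ∫⁻ z in {z | 0 < πZ z}, ∫⁻ z', pX x * q x z * (k z z' / πZ z) * p z' x' ∂μZ ∂μZ)
    (Pbar : X → X → ℝ≥0∞)
    (hPbar : ∀ x x', Pbar x x' = ∫⁻ z, ∫⁻ z', p z x * p z' x' * k z z' ∂μZ ∂μZ) :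
    (∀ᵐ xx : X × X ∂(μX.prod μX), Qbar xx.1 xx.2 = Pbar xx.1 xx.2) ∧
    (∀ᵐ x' ∂μX, ∫⁻ x, Qbar x x' ∂μX = pX x') := by
  have hπm : Measurable πZ := by
    have : πZ = fun z => ∫⁻ z', k z z' ∂μZ := funext hπZ
    rw [this]
    exact hk.lintegral_prod_right'
  have hπfin : ∀ᵐ z ∂μZ, πZ z < ∞ := by
    apply ae_lt_top hπm
    simp only [hπZ, hkprob]
    exact ENNReal.one_ne_top
  have hkz : ∀ z, Measurable (k z) := fun z => hk.comp measurable_prodMk_left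
  have hset : MeasurableSet {z | 0 < πZ z} := measurableSet_lt measurable_const hπm
  have key : ∀ᵐ x ∂μX, ∀ x', Qbar x x' = Pbar x x' := by
    filter_upwards [Measure.ae_ae_of_ae_prod hconsistent] with x hx x'
    rw [hQbar, hPbar, ← lintegral_indicator hset]
    apply lintegral_congr_ae
    filter_upwards [hx, hπfin] with z hz hfin
    by_cases h0 : 0 < πZ z
    · rw [Set.indicator_of_mem (show z ∈ {z | 0 < πZ z} from h0)]
      refine lintegral_congr fun z' => ?_
      rw [mul_comm (pX x), hz]
      calc p z x * πZ z * (k z z' / πZ z) * p z' x'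
          = p z x * (πZ z * (k z z' / πZ z)) * p z' x' := by ring
        _ = p z x * k z z' * p z' x' := by
          rw [ENNReal.mul_div_cancel h0.ne' hfin.ne]
        _ = _ := by ring
    · rw [Set.indicator_of_notMem (show z ∉ {z | 0 < πZ z} from h0)]
      have h1 : πZ z = 0 := by simpa using h0
      rw [hπZ, lintegral_eq_zero_iff (hkz z)] at h1
      symm
      calc _ = ∫⁻ z', 0 ∂μZ := by
            apply lintegral_congr_ae
            filter_upwards [h1] with z' hz'
            simp [hz']
        _ = 0 := by simp
  refine ⟨?_, Filter.Eventually.of_forall fun x' => ?_⟩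
  · filter_upwards [Measure.quasiMeasurePreserving_fst.ae key] with xx h
    exact h xx.2
  have hpx : Measurable fun z => p z x' := hp.comp measurable_prodMk_right
  have hpz : ∀ z, Measurable (p z) := fun z => hp.comp measurable_prodMk_left
  have hfac : ∀ x, Pbar x x' = ∫⁻ z, p z x * ∫⁻ z', p z' x' * k z z' ∂μZ ∂μZ := by
    intro x
    rw [hPbar]
    refine lintegral_congr fun z => ?_
    have hm : Measurable fun z' => p z' x' * k z z' := hpx.mul (hkz z)
    rw [← lintegral_const_mul _ hm]
    simp only [mul_assoc]
  have hG : Measurable (Function.uncurry fun z z' => p z' x' * k z z') :=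
    (hpx.comp measurable_snd).mul hk
  have hg : Measurable fun z => ∫⁻ z', p z' x' * k z z' ∂μZ := hG.lintegral_prod_right'
  calc ∫⁻ x, Qbar x x' ∂μX = ∫⁻ x, ∫⁻ z, p z x * ∫⁻ z', p z' x' * k z z' ∂μZ ∂μZ ∂μX := by
        apply lintegral_congr_ae
        filter_upwards [key] with x hx
        rw [hx, hfac]
    _ = ∫⁻ z, ∫⁻ x, p z x * ∫⁻ z', p z' x' * k z z' ∂μZ ∂μX ∂μZ := by
        apply lintegral_lintegral_swap
        exact ((hp.comp measurable_swap).mul (hg.comp measurable_snd)).aemeasurable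
    _ = ∫⁻ z, ∫⁻ z', p z' x' * k z z' ∂μZ ∂μZ := by
        refine lintegral_congr fun z => ?_
        rw [lintegral_mul_const _ (hpz z), hpprob, one_mul]
    _ = ∫⁻ z', ∫⁻ z, p z' x' * k z z' ∂μZ ∂μZ := lintegral_lintegral_swap hG.aemeasurable
    _ = pX x' := by
        rw [hpX]
        refine lintegral_congr fun z' => ?_
        simp only [hksymm _ z']
        rw [lintegral_const_mul _ (hkz z'), hπZ]
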